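/- Let C be a finite quotienting Boolean algebra over a finite alphabet A, let α : A* → M be a C-compatible monoid morphism into a finite monoid, and let ρ : 2^{A*} → R be a rating map quasi-multiplicative for an endomorphism γ of (R,+). Let S be the least Pol(C)-saturated subset of M × R for α and ρ. Then the α-pointed Pol(C)-optimal ρ-imprint satisfies: P_{Pol(C)}[α, ρ] = ↓_R {(s, γ(r)) : (s,r) ∈ S}. -/

import Mathlib

open Set

namespace Paper

abbrev Lang (A : Type) := Set (List A)
abbrev LClass (A : Type) := Set (Set (List A))

variable {A R M : Type}

/-- A lattice of languages: contains `∅` and `A*`, closed under finite union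
and finite intersection. -/
def LangLattice (𝒞 : LClass A) : Prop :=
  (∅ : Lang A) ∈ 𝒞 ∧ (Set.univ : Lang A) ∈ 𝒞 ∧
    (∀ K L : Lang A, K ∈ 𝒞 → L ∈ 𝒞 → K ∪ L ∈ 𝒞) ∧
    (∀ K L : Lang A, K ∈ 𝒞 → L ∈ 𝒞 → K ∩ L ∈ 𝒞)

/-- A Boolean algebra of languages: a lattice closed under complement. -/
def LangBoolAlg (𝒞 : LClass A) : Prop :=
  LangLattice 𝒞 ∧ ∀ L : Lang A, L ∈ 𝒞 → Lᶜ ∈ 𝒞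

/-- A class is quotient-closed when it is closed under left and right quotients
by words. -/
def QuotientClosed (𝒞 : LClass A) : Prop :=
  ∀ L ∈ 𝒞, ∀ w : List A,
    {u : List A | w ++ u ∈ L} ∈ 𝒞 ∧ {u : List A | u ++ w ∈ L} ∈ 𝒞

/-- The canonical preorder `≤_𝒞` associated with a class `𝒞`. -/
def cle (𝒞 : LClass A) (w w' : List A) : Prop := ∀ L ∈ 𝒞, w ∈ L → w' ∈ L

/-- The canonical equivalence `∼_𝒞` associated with a class `𝒞`. -/
def ceq (𝒞 : LClass A) (w w' : List A) : Prop := ∀ L ∈ 𝒞, (w ∈ L ↔ w' ∈ L)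

/-- The `∼_𝒞`-class of the word `w`. -/
def cclass (𝒞 : LClass A) (w : List A) : Lang A := {v | ceq 𝒞 w v}

/-- `D` is a `∼_𝒞`-class. -/
def IsCClass (𝒞 : LClass A) (D : Lang A) : Prop := ∃ w : List A, D = cclass 𝒞 w

/-- Multiplication of `∼_𝒞`-classes (the class of the concatenation of
representatives). -/
def cmul (𝒞 : LClass A) (D E : Lang A) : Lang A :=
  {x | ∃ u ∈ D, ∃ v ∈ E, ceq 𝒞 (u ++ v) x}

/-- Language concatenation. -/
def cat (K L : Lang A) : Lang A := {w | ∃ u ∈ K, ∃ v ∈ L, u ++ v = w}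

/-- Marked concatenation `K a L`. -/
def mcat (K : Lang A) (a : A) (L : Lang A) : Lang A :=
  {w | ∃ u ∈ K, ∃ v ∈ L, u ++ a :: v = w}

/-- Boolean closure: the least Boolean algebra containing `𝒞`. -/
def BoolC (𝒞 : LClass A) : LClass A := ⋂₀ {𝒟 : LClass A | LangBoolAlg 𝒟 ∧ 𝒞 ⊆ 𝒟}

/-- Polynomial closure: the least class containing `𝒞` closed under union and
marked concatenation. -/
def PolC (𝒞 : LClass A) : LClass A :=
  ⋂₀ {𝒟 : LClass A | 𝒞 ⊆ 𝒟 ∧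
    (∀ K L : Lang A, K ∈ 𝒟 → L ∈ 𝒟 → K ∪ L ∈ 𝒟) ∧
    (∀ (K L : Lang A) (a : A), K ∈ 𝒟 → L ∈ 𝒟 → mcat K a L ∈ 𝒟)}

/-- A cover of `L`: a finite set of languages whose union includes `L`. -/
def IsCover (Ks : LClass A) (L : Lang A) : Prop := Ks.Finite ∧ L ⊆ ⋃₀ Ks

/-- A `𝒞`-cover of `L`: a cover all of whose members belong to `𝒞`. -/
def IsCCover (𝒞 Ks : LClass A) (L : Lang A) : Prop := IsCover Ks L ∧ Ks ⊆ 𝒞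

/-- `α : A* → M` is a monoid morphism. -/
def IsMonoidMorphism [Monoid M] (α : List A → M) : Prop :=
  α [] = 1 ∧ ∀ u v : List A, α (u ++ v) = α u * α v

/-- `α` recognizes `L`. -/
def Recognizes [Monoid M] (α : List A → M) (L : Lang A) : Prop :=
  ∃ F : Set M, L = α ⁻¹' F

/-- A language is regular when it is recognized by a monoid morphism into a
finite monoid. -/
def RegularLang (L : Lang A) : Prop :=
  ∃ (N : Type) (_ : Monoid N) (_ : Finite N) (α : List A → N),
    IsMonoidMorphism α ∧ Recognizes α L

/-- The canonical order on a rating set: `r ≤ s` iff `r + s = s`. -/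
def rle [Add R] (r s : R) : Prop := r + s = s

/-- A rating map: maps `∅` to `0` and commutes with binary union. -/
def IsRatingMap [AddCommMonoid R] (ρ : Lang A → R) : Prop :=
  ρ ∅ = 0 ∧ ∀ K L : Lang A, ρ (K ∪ L) = ρ K + ρ L

/-- A nice rating map: the value of any language is a finite sum of values of
its words. -/
def IsNice [AddCommMonoid R] (ρ : Lang A → R) : Prop :=
  ∀ K : Lang A, ∃ l : List (List A), (∀ w ∈ l, w ∈ K) ∧
    ρ K = (l.map fun w => ρ {w}).sum

/-- A multiplicative rating map: also a morphism for concatenation. -/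
def IsMultiplicative [Semiring R] (ρ : Lang A → R) : Prop :=
  ρ ({[]} : Lang A) = 1 ∧ ∀ K L : Lang A, ρ (cat K L) = ρ K * ρ L

/-- An endomorphism of the additive monoid `(R, +)`. -/
def IsAddEndo [AddCommMonoid R] (γ : R → R) : Prop :=
  γ 0 = 0 ∧ ∀ r s : R, γ (r + s) = γ r + γ s

/-- A quasi-multiplicative rating map for the endomorphism `γ`. -/
def IsQuasiMult [Semiring R] (ρ : Lang A → R) (γ : R → R) : Prop :=
  IsAddEndo γ ∧ (∀ q r s : R, γ (q * γ r * s) = γ (q * r * s)) ∧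
    ∀ K L : Lang A, ρ (cat K L) = γ (ρ K * ρ L)

/-- The `ρ`-imprint of a set of languages. -/
def imprint [Add R] (ρ : Lang A → R) (Ks : LClass A) : Set R :=
  {r | ∃ K ∈ Ks, rle r (ρ K)}

/-- The `𝒟`-optimal `ρ`-imprint on `L` (the imprint of any optimal `𝒟`-cover
of `L`, i.e. the intersection of the imprints of all `𝒟`-covers of `L`). -/
def optImprint [Add R] (𝒟 : LClass A) (ρ : Lang A → R) (L : Lang A) : Set R :=
  {r | ∀ Ks : LClass A, IsCCover 𝒟 Ks L → r ∈ imprint ρ Ks}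

/-- Downset operation on subsets of a rating set. -/
def dclos [Add R] (U : Set R) : Set R := {r | ∃ s ∈ U, rle r s}

/-- Pointwise multiplication of subsets of a rating set. -/
def smul [Mul R] (U V : Set R) : Set R := {x | ∃ u ∈ U, ∃ v ∈ V, u * v = x}

/-- `S ⊆ M × R` is `Pol(𝒞)`-saturated for the morphism `α` (with associated
`∼_𝒞`-class map `cls`) and the rating map `ρ`. -/
def PolSaturated [Semiring R] [Monoid M] (α : List A → M) (cls : M → Lang A)
    (ρ : Lang A → R) (S : Set (M × R)) : Prop :=
  (∀ w : List A, (α w, ρ {w}) ∈ S) ∧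
  (∀ (s : M) (r q : R), (s, q) ∈ S → rle r q → (s, r) ∈ S) ∧
  (∀ (s₁ s₂ : M) (r₁ r₂ : R),
    (s₁, r₁) ∈ S → (s₂, r₂) ∈ S → (s₁ * s₂, r₁ * r₂) ∈ S) ∧
  (∀ (e : M) (f : R), (e, f) ∈ S → e * e = e → f * f = f →
    (e, f * ρ (cls e) * f) ∈ S)

/-!
Soundness. `Pol(𝒞)` is the increasing union of strata, the languages of the `k`-th one being upward
closed for a preorder that is compatible with concatenation. If `w` is idempotent modulo `∼_𝒞` and
`z ∼_𝒞 w`, then the power `p = w ^ (2 ^ k)` lies below `p z p` in this preorder. Hence a language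
of the stratum that contains `p` also contains `p [e]_𝒞 p`, which accounts for the idempotent rule
of saturated sets.

Completeness. Call a language covered if finitely many members of `Pol(𝒞)` cover it, each with a
rating that `S` accounts for. Covered languages are closed under union and concatenation. By an
argument in the style of Simon's factorization forests, all of `A*` is covered once the star of
every covered language on which `α` is constant with idempotent value `e` is covered. Such a star is
treated by induction on the idempotents `f ∈ R` that occur as ratings of short blocks: a word is
cut at its first and its last block of rating `f`, and all that lies in between is covered by
`[e]_𝒞`, at the price `f · ρ([e]_𝒞) · f` that the idempotent rule pays for.
-/

open Computability Pointwise Filter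

section KleeneStar

theorem kstar_add_le {K : Type*} [KleeneAlgebra K] (a b : K) : (a + b)∗ ≤ b∗ * (a * b∗)∗ := by
  refine kstar_le_of_mul_le_left (one_le_mul one_le_kstar one_le_kstar) ?_
  have mul_a : (a * b∗)∗ * a ≤ (a * b∗)∗ := calc
    (a * b∗)∗ * a ≤ (a * b∗)∗ * (a * b∗) := by
      gcongr; exact le_mul_of_one_le_right' one_le_kstar
    _ ≤ (a * b∗)∗ := kstar_mul_le_kstar
  have mul_b : b∗ * (a * b∗)∗ * b ≤ b∗ * (a * b∗)∗ := calc
    b∗ * (a * b∗)∗ * b = b∗ * b + b∗ * ((a * b∗)∗ * (a * (b∗ * b))) := by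
      nth_rw 1 [← one_add_kstar_mul (a := a * b∗)]
      simp only [mul_add, add_mul, mul_one, mul_assoc]
    _ ≤ b∗ * 1 + b∗ * ((a * b∗)∗ * (a * b∗)) := by
      rw [mul_one]; gcongr <;> exact kstar_mul_le_kstar
    _ = b∗ * (a * b∗)∗ := by rw [← mul_add, one_add_kstar_mul]
  rw [mul_add, mul_assoc]
  exact add_le (by gcongr) mul_b

theorem mem_kstar_singletons (w : List A) : w ∈ (⨆ a : A, ({[a]} : Language A))∗ :=
  Language.mem_kstar.2 ⟨w.map fun a ↦ [a], (List.flatMap_singleton' w).symm, fun y hy ↦ by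
    obtain ⟨a, -, rfl⟩ := List.mem_map.1 hy
    exact Language.mem_iSup.2 ⟨a, rfl⟩⟩

theorem append_mem_kstar {X : Language A} {u v : List A} (hu : u ∈ X∗) (hv : v ∈ X) :
    u ++ v ∈ X∗ :=
  (kstar_mul_le_kstar : X∗ * X ≤ X∗) (Language.append_mem_mul hu hv)

theorem IsMonoidMorphism.map_mem_of_mem_kstar [Monoid M] {α : List A → M}
    (hα : IsMonoidMorphism α) {H : Submonoid M} {X : Language A} (hX : ∀ x ∈ X, α x ∈ H)
    {w : List A} (hw : w ∈ X∗) : α w ∈ H := by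
  obtain ⟨l, rfl, hl⟩ := Language.mem_kstar.1 hw
  clear hw
  induction l with
  | nil => exact hα.1 ▸ H.one_mem
  | cons x l ih =>
    rw [List.flatten_cons, hα.2]
    exact H.mul_mem (hX x (hl x List.mem_cons_self))
      (ih fun y hy ↦ hl y (List.mem_cons_of_mem x hy))

end KleeneStar

/-! ### Stars of languages in finite monoids -/

/-- A property of languages that is inherited by sublanguages, finite unions and concatenations. -/
structure IsMulIdeal (P : Language A → Prop) : Prop where
  mono {X Y : Language A} : X ≤ Y → P Y → P X
  one : P 1
  add {X Y : Language A} : P X → P Y → P (X + Y)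
  mul {X Y : Language A} : P X → P Y → P (X * Y)

/-- A property of languages that is moreover inherited by the Kleene star of a language on which `α`
is constant with an idempotent value. By `IsIdempotentStarClosed.kstar` it is then inherited by all
Kleene stars, which plays the role of Simon's factorization forests. -/
structure IsIdempotentStarClosed [Monoid M] (α : List A → M) (P : Language A → Prop) : Prop
    extends IsMulIdeal P where
  kstar_of_idempotent {e : M} {X : Language A} :
    IsIdempotentElem e → (∀ w ∈ X, α w = e) → P X → P X∗

namespace IsMulIdeal

variable {P : Language A → Prop}

theorem zero (hP : IsMulIdeal P) : P 0 := hP.mono zero_le hP.one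

theorem biSup {ι : Type*} (hP : IsMulIdeal P) {I : Set ι} (hI : I.Finite)
    {X : ι → Language A} (hX : ∀ i ∈ I, P (X i)) : P (⨆ i ∈ I, X i) := by
  have sup_closed : SupClosed {X | P X} := fun _ hX _ hY ↦ hP.add hX hY
  exact sup_closed.biSup_mem hI hP.zero hX

theorem iSup {ι : Type*} [Finite ι] (hP : IsMulIdeal P)
    {X : ι → Language A} (hX : ∀ i, P (X i)) : P (⨆ i, X i) := by
  simpa using hP.biSup finite_univ fun i _ ↦ hX i

theorem singleton (hP : IsMulIdeal P) (hletter : ∀ a : A, P {[a]}) (w : List A) : P {w} := by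
  induction w with
  | nil => exact hP.one
  | cons a w ih =>
    refine hP.mono ?_ (hP.mul (hletter a) ih)
    rintro _ rfl
    exact ⟨[a], rfl, w, rfl, rfl⟩

theorem of_finite (hP : IsMulIdeal P) (hletter : ∀ a : A, P {[a]}) {X : Language A}
    (hX : Set.Finite X) : P X := by
  have le_biSup : X ≤ ⨆ w ∈ X, ({w} : Language A) := fun w hw ↦
    Language.mem_iSup.2 ⟨w, Language.mem_iSup.2 ⟨hw, rfl⟩⟩
  exact hP.mono le_biSup (hP.biSup hX fun w _ ↦ hP.singleton hletter w)

end IsMulIdeal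

/-- `IsRun α X U p q w`: the word `w` is a nonempty concatenation of elements of `X` that labels a
path from `p` to `q` in the right Cayley graph of `M`, with all intermediate vertices in `U`. -/
inductive IsRun [Monoid M] (α : List A → M) (X : Language A) (U : Set M) (p : M) :
    M → List A → Prop
  | single {x : List A} : x ∈ X → IsRun α X U p (p * α x) x
  | snoc {q : M} {w x : List A} : IsRun α X U p q w → q ∈ U → x ∈ X →
      IsRun α X U p (q * α x) (w ++ x)

/-- The language of all labels of runs from `p` to `q`. -/
def runs [Monoid M] (α : List A → M) (X : Language A) (U : Set M) (p q : M) : Language A :=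
  {w | IsRun α X U p q w}

section Simon

variable [Monoid M] {α : List A → M} {X : Language A} {U : Set M} {p q r : M} {w : List A}
  {H : Submonoid M} {P : Language A → Prop}

theorem IsRun.map_mem (hα : IsMonoidMorphism α) (hX : ∀ x ∈ X, α x ∈ H)
    (hw : IsRun α X U p q w) : α w ∈ H := by
  induction hw with
  | single hx => exact hX _ hx
  | snoc _ _ hx ih => exact hα.2 _ _ ▸ H.mul_mem ih (hX _ hx)

theorem IsRun.mul_map_eq (hα : IsMonoidMorphism α) (hw : IsRun α X U p q w) : p * α w = q := by
  induction hw with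
  | single _ => rfl
  | snoc _ _ _ ih => rw [hα.2, ← mul_assoc, ih]

theorem runs_empty_le : runs α X ∅ p q ≤ X := by
  rintro w (hx | ⟨_, hq, _⟩)
  · exact hx
  · exact hq.elim

-- Cut a run at its visits to `r`, as in Kleene's state elimination.
theorem runs_insert_le : runs α X (insert r U) p q ≤
    runs α X U p q + runs α X U p r * ((runs α X U r r)∗ * runs α X U r q) := by
  intro w hw
  induction hw with
  | single hx => exact Or.inl (.single hx)
  | @snoc q w x _ hq hx ih =>
    rcases ih with direct | ⟨u, hu, _, ⟨loops, hloops, v, hv, rfl⟩, rfl⟩ <;>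
      rcases hq with rfl | hq
    · exact Or.inr ⟨w, direct, x, ⟨[], Language.nil_mem_kstar _, x, .single hx, rfl⟩, rfl⟩
    · exact Or.inl (.snoc direct hq hx)
    · exact Or.inr ⟨u, hu, (loops ++ v) ++ x,
        ⟨loops ++ v, append_mem_kstar hloops hv, x, .single hx, rfl⟩, by simp⟩
    · exact Or.inr ⟨u, hu, loops ++ (v ++ x), ⟨loops, hloops, v ++ x, .snoc hv hq hx, rfl⟩, by simp⟩

-- Cut a path starting at `1` each time it leaves `U`, and read the remaining word from `1` again.
theorem kstar_le_kstar_runs_mul (hα : IsMonoidMorphism α) (hX : ∀ x ∈ X, α x ∈ H) :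
    X∗ ≤ (⨆ z ∈ (H \ U : Set M), runs α X U 1 z)∗ * (1 + ⨆ q, runs α X U 1 q) := by
  set completed := ⨆ z ∈ (H \ U : Set M), runs α X U 1 z
  set pending := 1 + ⨆ q, runs α X U 1 q
  have run_mem_pending {q : M} {w : List A} (hw : IsRun α X U 1 q w) : w ∈ pending :=
    Or.inr (Language.mem_iSup.2 ⟨q, hw⟩)
  refine kstar_le_of_mul_le_left (one_le_mul one_le_kstar le_self_add) ?_
  rintro _ ⟨_, ⟨u, hu, v, hv, rfl⟩, x, hx, rfl⟩
  rcases hv with rfl | hv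
  · exact ⟨u, hu, x, run_mem_pending (.single hx), by simp⟩
  obtain ⟨q, hv⟩ := Language.mem_iSup.1 hv
  by_cases hq : q ∈ U
  · exact ⟨u, hu, v ++ x, run_mem_pending (.snoc hv hq hx), by simp⟩
  · have hqH : q ∈ H := by simpa [← hv.mul_map_eq hα] using hv.map_mem hα hX
    have hv_completed : v ∈ completed := by
      simp only [completed, Language.mem_iSup]
      exact ⟨q, ⟨hqH, hq⟩, hv⟩
    exact ⟨u ++ v, append_mem_kstar hu hv_completed, x,
      run_mem_pending (.single hx), rfl⟩

/-- The elements of `H` that fix `r` under right multiplication. -/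
def rightStabilizer (H : Submonoid M) (r : M) : Submonoid M where
  carrier := {n | n ∈ H ∧ r * n = r}
  one_mem' := ⟨H.one_mem, mul_one r⟩
  mul_mem' := fun ⟨ha, har⟩ ⟨hb, hbr⟩ ↦ ⟨H.mul_mem ha hb, by rw [← mul_assoc, har, hbr]⟩

theorem IsMulIdeal.runs (hP : IsMulIdeal P) (hα : IsMonoidMorphism α)
    (hX : ∀ x ∈ X, α x ∈ H) (hPX : P X) (hU : U.Finite)
    (hstar : ∀ r ∈ U, ∀ Y : Language A, (∀ y ∈ Y, α y ∈ rightStabilizer H r) → P Y → P Y∗)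
    (p q : M) : P (runs α X U p q) := by
  induction U, hU using Set.Finite.induction_on generalizing p q with
  | empty => exact hP.mono runs_empty_le hPX
  | @insert r U _ _ ih =>
    replace ih := ih fun s hs ↦ hstar s (mem_insert_of_mem r hs)
    have loops : P (Paper.runs α X U r r)∗ :=
      hstar r (mem_insert r U) _ (fun w hw ↦ ⟨hw.map_mem hα hX, hw.mul_map_eq hα⟩) (ih r r)
    exact hP.mono runs_insert_le (hP.add (ih p q) (hP.mul (ih p r) (hP.mul loops (ih r q))))

namespace IsIdempotentStarClosed

theorem kstar_of_leftZeros (hP : IsIdempotentStarClosed α P) (hα : IsMonoidMorphism α)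
    {Z : Set M} (hZ : Z.Finite) (hZH : Z ⊆ H) (hzero : ∀ z ∈ Z, ∀ n ∈ H, z * n = z)
    {Y : M → Language A} (hYZ : ∀ z ∈ Z, ∀ w ∈ Y z, α w = z) (hPY : ∀ z ∈ Z, P (Y z)) :
    P (⨆ z ∈ Z, Y z)∗ := by
  induction Z, hZ using Set.Finite.induction_on with
  | empty => exact hP.mono (kstar_eq_one.2 (by simp)).le hP.one
  | @insert z Z _ _ ih =>
    obtain ⟨hzH, hZH⟩ := insert_subset_iff.1 hZH
    simp only [forall_mem_insert] at hzero hYZ hPY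
    replace ih := ih hZH hzero.2 hYZ.2 hPY.2
    have star_mem : ∀ w ∈ (⨆ z ∈ Z, Y z)∗, α w ∈ H := fun w hw ↦ by
      refine hα.map_mem_of_mem_kstar (fun x hx ↦ ?_) hw
      simp only [Language.mem_iSup] at hx
      obtain ⟨y, hy, hx⟩ := hx
      exact hYZ.2 y hy x hx ▸ hZH hy
    have value_eq : ∀ w ∈ Y z * (⨆ z ∈ Z, Y z)∗, α w = z := by
      rintro _ ⟨u, hu, v, hv, rfl⟩
      rw [hα.2, hYZ.1 u hu, hzero.1 _ (star_mem v hv)]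
    rw [iSup_insert, ← add_eq_sup]
    exact hP.mono (kstar_add_le _ _)
      (hP.mul ih (hP.kstar_of_idempotent (hzero.1 z hzH) value_eq (hP.mul hPY.1 ih)))

theorem kstar_of_map_mem [Finite M] (hP : IsIdempotentStarClosed α P) (hα : IsMonoidMorphism α)
    (H : Submonoid M) (X : Language A) (hX : ∀ x ∈ X, α x ∈ H) (hPX : P X) : P X∗ := by
  induction H using WellFoundedLT.induction generalizing X with
  | ind H ih =>
  let U : Set M := {r | ∃ n ∈ H, r * n ≠ r}
  have stabilizer_lt : ∀ r ∈ U, rightStabilizer H r < H := by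
    rintro r ⟨n, hn, hrn⟩
    exact SetLike.lt_iff_le_and_exists.2 ⟨fun _ hm ↦ hm.1, n, hn, fun hm ↦ hrn hm.2⟩
  have P_runs (q : M) : P (Paper.runs α X U 1 q) :=
    hP.runs hα hX hPX U.toFinite (fun r hr ↦ ih _ (stabilizer_lt r hr)) 1 q
  have fixed : ∀ z ∈ (H \ U : Set M), ∀ n ∈ H, z * n = z := fun z hz n hn ↦
    by_contra fun hne ↦ hz.2 ⟨n, hn, hne⟩
  have P_completed : P (⨆ z ∈ (H \ U : Set M), Paper.runs α X U 1 z)∗ :=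
    hP.kstar_of_leftZeros hα (toFinite _) sdiff_subset fixed
      (fun z _ w hw ↦ by simpa using hw.mul_map_eq hα) (fun z _ ↦ P_runs z)
  exact hP.mono (kstar_le_kstar_runs_mul hα hX)
    (hP.mul P_completed (hP.add hP.one (hP.iSup P_runs)))

theorem kstar [Finite M] (hP : IsIdempotentStarClosed α P) (hα : IsMonoidMorphism α)
    (hPX : P X) : P X∗ :=
  hP.kstar_of_map_mem hα ⊤ X (fun _ _ ↦ Submonoid.mem_top _) hPX

theorem top [Finite A] [Finite M] (hP : IsIdempotentStarClosed α P) (hα : IsMonoidMorphism α)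
    (hletter : ∀ a : A, P {[a]}) : P ⊤ :=
  hP.mono (fun w _ ↦ mem_kstar_singletons w) (hP.kstar hα (hP.iSup hletter))

end IsIdempotentStarClosed

end Simon

/-! ### Blocks with an idempotent value -/

section Blocks

variable {B : Language A} {l : List A}

/-- The words that have no infix in `B`. -/
def avoiding (B : Language A) : Language A := {l | ∀ b ∈ B, ¬ b <:+: l}

theorem notMem_avoiding : l ∉ avoiding B ↔ ∃ b ∈ B, b <:+: l := by
  rw [← not_iff_not, not_not, not_exists]
  exact forall_congr' fun b ↦ not_and.symm

theorem mem_avoiding_of_infix {u : List A} (hl : l ∈ avoiding B) (hu : u <:+: l) :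
    u ∈ avoiding B :=
  fun b hb hbu ↦ hl b hb (hbu.trans hu)

theorem nil_mem_avoiding (hB : [] ∉ B) : [] ∈ avoiding B :=
  fun _ hb hb' ↦ hB (List.infix_nil.1 hb' ▸ hb)

theorem exists_first_infix (hB : [] ∉ B) (hl : l ∉ avoiding B) :
    ∃ u ∈ avoiding B, ∃ b ∈ B, ∃ v, l = u ++ b ++ v := by
  induction l using List.reverseRecOn with
  | nil => exact absurd (nil_mem_avoiding hB) hl
  | append_singleton l a ih =>
    by_cases avoids : l ∈ avoiding B
    · obtain ⟨b, hb, hbl⟩ := notMem_avoiding.1 hl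
      obtain ⟨u, hu⟩ := (List.infix_concat_iff.1 hbl).resolve_right (avoids b hb)
      obtain ⟨b, c, rfl⟩ := (List.eq_nil_or_concat' b).resolve_left fun h ↦ hB (h ▸ hb)
      have hul : u ++ b = l := by
        rw [← List.append_assoc] at hu
        exact (List.append_inj' hu rfl).1
      exact ⟨u, mem_avoiding_of_infix avoids ⟨[], b, by simpa using hul⟩, _, hb, [], by simp [hu]⟩
    · obtain ⟨u, hu, b, hb, v, rfl⟩ := ih avoids
      exact ⟨u, hu, b, hb, v ++ [a], by simp⟩

theorem exists_last_infix (hB : [] ∉ B) (hl : l ∉ avoiding B) :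
    ∃ v ∈ avoiding B, ∃ b ∈ B, ∃ u, l = u ++ b ++ v := by
  induction l with
  | nil => exact absurd (nil_mem_avoiding hB) hl
  | cons a l ih =>
    by_cases avoids : l ∈ avoiding B
    · obtain ⟨b, hb, hbl⟩ := notMem_avoiding.1 hl
      obtain ⟨v, hv⟩ := (List.infix_cons_iff.1 hbl).resolve_right (avoids b hb)
      obtain ⟨c, b, rfl⟩ := List.exists_cons_of_ne_nil fun h ↦ hB (h ▸ hb)
      have hvl : b ++ v = l := (List.cons_eq_cons.1 hv).2
      exact ⟨v, mem_avoiding_of_infix avoids ⟨b, [], by simpa using hvl⟩, _, hb, [], by simp [hv]⟩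
    · obtain ⟨v, hv, b, hb, u, rfl⟩ := ih avoids
      exact ⟨v, hv, b, hb, a :: u, by simp⟩

theorem top_le_avoiding_mul_avoiding (hB : [] ∉ B) :
    ⊤ ≤ avoiding B * (1 + B + B * ⊤ * B) * avoiding B := by
  intro l _
  by_cases hl : l ∈ avoiding B
  · exact ⟨l, ⟨l, hl, [], Or.inl (Or.inl rfl), by simp⟩, [], nil_mem_avoiding hB, by simp⟩
  obtain ⟨u, hu, b, hb, v, rfl⟩ := exists_first_infix hB hl
  by_cases avoids : v ∈ avoiding B
  · exact ⟨u ++ b, ⟨u, hu, b, Or.inl (Or.inr hb), rfl⟩, v, avoids, rfl⟩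
  obtain ⟨v, hv, c, hc, m, rfl⟩ := exists_last_infix hB avoids
  have middle : b ++ m ++ c ∈ B * ⊤ * B := ⟨b ++ m, ⟨b, hb, m, trivial, rfl⟩, c, hc, rfl⟩
  exact ⟨u ++ (b ++ m ++ c), ⟨u, hu, _, Or.inr middle, rfl⟩, v, hv, by simp⟩

variable [Monoid M] {φ : List A → M}

theorem isIdempotentStarClosed_exists_idempotent_infix :
    IsIdempotentStarClosed φ fun X ↦ ∃ n, ∀ w ∈ X, n ≤ w.length →
      ∃ b, b <:+: w ∧ b ≠ [] ∧ IsIdempotentElem (φ b) where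
  mono := fun h ⟨n, hn⟩ ↦ ⟨n, fun w hw ↦ hn w (h hw)⟩
  one := ⟨1, by rintro _ rfl hw; simp at hw⟩
  add := fun ⟨n, hn⟩ ⟨m, hm⟩ ↦ ⟨n + m, fun w hw hlen ↦
    hw.elim (fun h ↦ hn w h (by lia)) (fun h ↦ hm w h (by lia))⟩
  mul := by
    rintro X Y ⟨n, hn⟩ ⟨m, hm⟩
    refine ⟨n + m, ?_⟩
    rintro _ ⟨x, hx, y, hy, rfl⟩ hlen
    rw [List.length_append] at hlen
    rcases (by lia : n ≤ x.length ∨ m ≤ y.length) with h | h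
    · obtain ⟨b, hbx, hb⟩ := hn x hx h
      exact ⟨b, hbx.trans (List.prefix_append x y).isInfix, hb⟩
    · obtain ⟨b, hby, hb⟩ := hm y hy h
      exact ⟨b, hby.trans (List.suffix_append x y).isInfix, hb⟩
  kstar_of_idempotent := by
    rintro e X he hX -
    refine ⟨1, fun w hw hlen ↦ ?_⟩
    obtain ⟨_ | ⟨x, L⟩, rfl, hL⟩ := Language.mem_kstar_iff_exists_nonempty.1 hw
    · simp at hlen
    · obtain ⟨hxX, hx⟩ := hL x List.mem_cons_self
      exact ⟨x, (List.prefix_append x L.flatten).isInfix, hx, by rwa [hX x hxX]⟩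

theorem exists_short_idempotent_infix [Finite A] [Finite M] (hφ : IsMonoidMorphism φ) :
    ∃ n, ∀ w : List A, n ≤ w.length →
      ∃ b, b <:+: w ∧ b ≠ [] ∧ b.length ≤ n ∧ IsIdempotentElem (φ b) := by
  obtain ⟨n, hn⟩ := isIdempotentStarClosed_exists_idempotent_infix.top hφ
    fun a ↦ ⟨2, by rintro _ rfl hw; simp at hw⟩
  refine ⟨n, fun w hw ↦ ?_⟩
  obtain ⟨b, hbw, hb, hidem⟩ := hn (w.take n) trivial (by simpa using hw)
  exact ⟨b, hbw.trans (List.take_prefix n w).isInfix, hb,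
    hbw.length_le.trans (List.length_take_le n w), hidem⟩

/-- The nonempty words of length at most `n` with value `f`. -/
def shortBlocks (φ : List A → M) (n : ℕ) (f : M) : Language A :=
  {b | b ≠ [] ∧ b.length ≤ n ∧ φ b = f}

/-- The words whose nonempty infixes of length at most `n` with an idempotent value have their value
in `Φ`. -/
def withIdempotentsIn (φ : List A → M) (n : ℕ) (Φ : Set M) : Language A :=
  {l | ∀ f, IsIdempotentElem f → l ∉ avoiding (shortBlocks φ n f) → f ∈ Φ}

theorem withIdempotentsIn_insert_le {n : ℕ} {f : M} {Φ : Set M} :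
    withIdempotentsIn φ n (insert f Φ) ≤
      withIdempotentsIn φ n Φ *
          (1 + shortBlocks φ n f + shortBlocks φ n f * ⊤ * shortBlocks φ n f) *
        withIdempotentsIn φ n Φ := by
  intro l hl
  have mem_of_infix {u : List A} (hu : u ∈ avoiding (shortBlocks φ n f)) (hul : u <:+: l) :
      u ∈ withIdempotentsIn φ n Φ := by
    intro g hg hgu
    rcases hl g hg fun hgl ↦ hgu (mem_avoiding_of_infix hgl hul) with rfl | hgΦ
    · exact absurd hu hgu
    · exact hgΦ
  obtain ⟨_, ⟨u, hu, m, hm, rfl⟩, v, hv, rfl⟩ :=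
    top_le_avoiding_mul_avoiding (B := shortBlocks φ n f) (fun h ↦ h.1 rfl) (Set.mem_univ l)
  exact ⟨u ++ m, ⟨u, mem_of_infix hu ⟨[], m ++ v, by simp⟩, m, hm, rfl⟩,
    v, mem_of_infix hv ⟨u ++ m, [], by simp⟩, rfl⟩

-- Induct on the set `Φ` of values that short idempotent blocks may take: a word with a block of
-- value `f` is cut at the first and the last such block.
theorem IsMulIdeal.top_of_idempotent_blocks [Finite A] [Finite M] {P : Language A → Prop}
    (hP : IsMulIdeal P) (hφ : IsMonoidMorphism φ) (hletter : ∀ a : A, P {[a]})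
    (hblock : ∀ (f : M) (B : Language A), IsIdempotentElem f → Set.Finite B →
      (∀ b ∈ B, b ≠ [] ∧ φ b = f) → P (B * ⊤ * B)) : P ⊤ := by
  obtain ⟨n, hn⟩ := exists_short_idempotent_infix hφ
  have finite_blocks (f : M) : Set.Finite (shortBlocks φ n f) :=
    (List.finite_length_le A n).subset fun b hb ↦ hb.2.1
  have P_with (Φ : Set M) (hΦ : ∀ f ∈ Φ, IsIdempotentElem f) : P (withIdempotentsIn φ n Φ) := by
    induction Φ, Φ.toFinite using Set.Finite.induction_on with
    | empty =>
      have short : withIdempotentsIn φ n ∅ ≤ {l | l.length ≤ n} := fun l hl ↦ by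
        by_contra hlen
        obtain ⟨b, hbl, hb, hbn, hidem⟩ := hn l (not_le.1 hlen).le
        exact hl _ hidem (notMem_avoiding.2 ⟨b, ⟨hb, hbn, rfl⟩, hbl⟩)
      exact hP.mono short (hP.of_finite hletter (List.finite_length_le A n))
    | @insert f Φ _ _ ih =>
      obtain ⟨hf, hΦ⟩ := forall_mem_insert.1 hΦ
      have P_middle := hblock f _ hf (finite_blocks f) fun b hb ↦ ⟨hb.1, hb.2.2⟩
      exact hP.mono withIdempotentsIn_insert_le (hP.mul (hP.mul (ih hΦ) (hP.add
        (hP.add hP.one (hP.of_finite hletter (finite_blocks f))) P_middle)) (ih hΦ))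
  have top_le : ⊤ ≤ withIdempotentsIn φ n {f | IsIdempotentElem f} := fun _ _ _ hf _ ↦ hf
  exact hP.mono top_le (P_with _ fun _ hf ↦ hf)

end Blocks

section Substitution

variable {B : Type} {Y : B → Language A} {Z Z' : Language B}

/-- The language obtained from `Z` by replacing each letter `b` with the language `Y b`. -/
def substitute (Y : B → Language A) (Z : Language B) : Language A := ⨆ l ∈ Z, (l.map Y).prod

theorem mem_substitute {w : List A} : w ∈ substitute Y Z ↔ ∃ l ∈ Z, w ∈ (l.map Y).prod := by
  simp only [substitute, Language.mem_iSup, exists_prop]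

theorem substitute_mono (h : Z ≤ Z') : substitute Y Z ≤ substitute Y Z' :=
  biSup_mono h

theorem substitute_one_le : substitute Y 1 ≤ 1 :=
  iSup₂_le fun l hl ↦ by obtain rfl : l = [] := hl; rfl

theorem substitute_add_le : substitute Y (Z + Z') ≤ substitute Y Z + substitute Y Z' :=
  iSup₂_le fun l hl ↦ hl.elim
    (fun h ↦ le_add_of_le_left (le_iSup₂_of_le l h le_rfl))
    (fun h ↦ le_add_of_le_right (le_iSup₂_of_le l h le_rfl))

theorem substitute_mul_le : substitute Y (Z * Z') ≤ substitute Y Z * substitute Y Z' := by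
  refine iSup₂_le ?_
  rintro _ ⟨l, hl, l', hl', rfl⟩
  rw [List.map_append, List.prod_append]
  exact mul_le_mul' (le_iSup₂_of_le l hl le_rfl) (le_iSup₂_of_le l' hl' le_rfl)

theorem substitute_singleton_le (b : B) : substitute Y {[b]} ≤ Y b :=
  iSup₂_le fun l hl ↦ by obtain rfl : l = [b] := hl; simp

theorem kstar_iSup_le_substitute_top : (⨆ b, Y b)∗ ≤ substitute Y ⊤ := by
  refine kstar_le_of_mul_le_left (le_iSup₂_of_le [] trivial le_rfl) ?_
  rintro _ ⟨u, hu, v, hv, rfl⟩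
  obtain ⟨l, -, hu⟩ := mem_substitute.1 hu
  obtain ⟨b, hv⟩ := Language.mem_iSup.1 hv
  refine mem_substitute.2 ⟨l ++ [b], trivial, ?_⟩
  simpa using Language.append_mem_mul hu hv

theorem IsMulIdeal.substitute {P : Language A → Prop} (hP : IsMulIdeal P) (Y : B → Language A) :
    IsMulIdeal fun Z ↦ P (substitute Y Z) where
  mono h hX := hP.mono (substitute_mono h) hX
  one := hP.mono substitute_one_le hP.one
  add hX hX' := hP.mono substitute_add_le (hP.add hX hX')
  mul hX hX' := hP.mono substitute_mul_le (hP.mul hX hX')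

end Substitution

/-! ### Finite covers by labelled languages -/

section Covers

variable {α : List A → M} {T T' : Set (M × R × Language A)} {X X' : Language A}

/-- Finitely many labelled languages `(s, r, K) ∈ T` suffice to place every word `w ∈ X` in some `K`
with first label `s = α w`. The second label `r` stands for a bound on the rating of `K`. -/
def FinitelyCovered (α : List A → M) (T : Set (M × R × Language A)) (X : Language A) : Prop :=
  ∃ F ⊆ T, F.Finite ∧ ∀ w ∈ X, ∃ t ∈ F, t.1 = α w ∧ w ∈ t.2.2

/-- The languages of `T` labelled by `s` and `r`. -/
def slice (T : Set (M × R × Language A)) (s : M) (r : R) : Set (M × R × Language A) :=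
  {t ∈ T | t.1 = s ∧ t.2.1 = r}

namespace FinitelyCovered

theorem mono (hX : FinitelyCovered α T X) (hXX' : X' ≤ X) (hT : T ⊆ T') :
    FinitelyCovered α T' X' :=
  let ⟨F, hFT, hF, hcover⟩ := hX
  ⟨F, hFT.trans hT, hF, fun w hw ↦ hcover w (hXX' hw)⟩

theorem of_mem {s : M} {r : R} {K : Language A} (hT : (s, r, K) ∈ T) (hα : ∀ w ∈ X, α w = s)
    (hX : X ≤ K) : FinitelyCovered α T X :=
  ⟨{(s, r, K)}, by simpa using hT, finite_singleton _, fun w hw ↦ ⟨_, rfl, (hα w hw).symm, hX hw⟩⟩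

theorem add (hX : FinitelyCovered α T X) (hX' : FinitelyCovered α T X') :
    FinitelyCovered α T (X + X') := by
  obtain ⟨F, hFT, hF, hcover⟩ := hX
  obtain ⟨F', hFT', hF', hcover'⟩ := hX'
  refine ⟨F ∪ F', union_subset hFT hFT', hF.union hF', ?_⟩
  rintro w (hw | hw)
  · obtain ⟨t, ht, h⟩ := hcover w hw
    exact ⟨t, Or.inl ht, h⟩
  · obtain ⟨t, ht, h⟩ := hcover' w hw
    exact ⟨t, Or.inr ht, h⟩

theorem zero : FinitelyCovered α T 0 :=
  ⟨∅, empty_subset T, finite_empty, fun _ hw ↦ hw.elim⟩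

theorem biSup {ι : Type*} {I : Set ι} (hI : I.Finite) {X : ι → Language A}
    (hX : ∀ i ∈ I, FinitelyCovered α T (X i)) : FinitelyCovered α T (⨆ i ∈ I, X i) := by
  have sup_closed : SupClosed {X | FinitelyCovered α T X} := fun _ hX _ hX' ↦ hX.add hX'
  exact sup_closed.biSup_mem hI zero hX

theorem map_eq {s : M} {r : R} (hX : FinitelyCovered α (slice T s r) X) {w : List A}
    (hw : w ∈ X) : α w = s :=
  let ⟨_, hFT, _, hcover⟩ := hX
  let ⟨_, ht, htw, _⟩ := hcover w hw
  htw.symm.trans (hFT ht).2.1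

theorem exists_iSup_slice {e : M} (hX : FinitelyCovered α T X) (he : ∀ w ∈ X, α w = e) :
    ∃ Y : R → Language A, ⨆ r, Y r = X ∧ ∀ r, FinitelyCovered α (slice T e r) (Y r) := by
  obtain ⟨F, hFT, hF, hcover⟩ := hX
  refine ⟨fun r ↦ {w | w ∈ X ∧ ∃ t ∈ slice F e r, w ∈ t.2.2}, ?_, fun r ↦ ?_⟩
  · ext w
    refine Language.mem_iSup.trans ⟨fun ⟨_, hw, _⟩ ↦ hw, fun hw ↦ ?_⟩
    obtain ⟨t, ht, htw, hwt⟩ := hcover w hw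
    exact ⟨t.2.1, hw, t, ⟨ht, htw.trans (he w hw), rfl⟩, hwt⟩
  · refine ⟨slice F e r, fun t ht ↦ ⟨hFT ht.1, ht.2⟩, hF.subset fun t ht ↦ ht.1, ?_⟩
    rintro w ⟨hw, t, ht, hwt⟩
    exact ⟨t, ht, ht.2.1.trans (he w hw).symm, hwt⟩

variable [Monoid M]

theorem mul [Mul R] (hα : IsMonoidMorphism α) (hX : FinitelyCovered α T X)
    (hX' : FinitelyCovered α T' X') : FinitelyCovered α (T * T') (X * X') := by
  obtain ⟨F, hFT, hF, hcover⟩ := hX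
  obtain ⟨F', hFT', hF', hcover'⟩ := hX'
  refine ⟨F * F', mul_subset_mul hFT hFT', hF.mul hF', ?_⟩
  rintro _ ⟨u, hu, v, hv, rfl⟩
  obtain ⟨t, ht, htu, hut⟩ := hcover u hu
  obtain ⟨t', ht', htv, hvt⟩ := hcover' v hv
  exact ⟨t * t', mul_mem_mul ht ht', by rw [Prod.fst_mul, htu, htv, hα.2],
    Language.append_mem_mul hut hvt⟩

theorem isMulIdeal [Mul R] (hα : IsMonoidMorphism α) (hmul : T * T ⊆ T)
    (hone : FinitelyCovered α T 1) : IsMulIdeal (FinitelyCovered α T) where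
  mono hXY hY := hY.mono hXY Subset.rfl
  one := hone
  add := add
  mul hX hY := (hX.mul hα hY).mono le_rfl hmul

end FinitelyCovered

section Star

variable [Monoid M] [Monoid R] {e : M} {Y : R → Language A}

theorem slice_mul_slice_subset (hmul : T * T ⊆ T) (he : IsIdempotentElem e) (r s : R) :
    slice T e r * slice T e s ⊆ slice T e (r * s) := by
  rintro _ ⟨t, ⟨ht, rfl, rfl⟩, t', ⟨ht', he', rfl⟩, rfl⟩
  exact ⟨hmul (mul_mem_mul ht ht'), by rw [Prod.fst_mul, he', he.eq], rfl⟩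

/-- The language of all words that `α` maps to `s`. -/
def fiber (α : List A → M) (s : M) : Language A := α ⁻¹' {s}

namespace FinitelyCovered

theorem slice_prod (hα : IsMonoidMorphism α) (hmul : T * T ⊆ T)
    (he : IsIdempotentElem e) (hY : ∀ r, FinitelyCovered α (slice T e r) (Y r)) {l : List R}
    (hl : l ≠ []) : FinitelyCovered α (slice T e l.prod) (l.map Y).prod := by
  induction l, hl using List.recNeNil with
  | singleton r => simpa using hY r
  | cons r l _ ih =>
    rw [List.map_cons, List.prod_cons, List.prod_cons]
    exact ((hY r).mul hα ih).mono le_rfl (slice_mul_slice_subset hmul he _ _)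

theorem substitute_top_le (hα : IsMonoidMorphism α) (hmul : T * T ⊆ T)
    (he : IsIdempotentElem e) (hY : ∀ r, FinitelyCovered α (slice T e r) (Y r)) :
    substitute Y ⊤ ≤ 1 + fiber α e := by
  intro w hw
  obtain ⟨l, -, hw⟩ := mem_substitute.1 hw
  rcases eq_or_ne l [] with rfl | hl
  · exact Or.inl hw
  · exact Or.inr ((slice_prod hα hmul he hY hl).map_eq hw)

-- Everything between the first and the last block of value `f` has value `e`, so the single
-- language `D` covers it.
theorem substitute_blocks (hα : IsMonoidMorphism α) (hmul : T * T ⊆ T)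
    (he : IsIdempotentElem e) (hY : ∀ r, FinitelyCovered α (slice T e r) (Y r))
    {f q : R} {D : Language A} (hD : ∀ w, α w = e → w ∈ D)
    (hsharp : slice T e f * {(e, q, D)} * slice T e f ⊆ T)
    {B : Language R} (hB : Set.Finite B) (hBf : ∀ b ∈ B, b ≠ [] ∧ b.prod = f) :
    FinitelyCovered α T (substitute Y (B * ⊤ * B)) := by
  have blocks : FinitelyCovered α (slice T e f) (substitute Y B) := biSup hB fun b hb ↦ by
    obtain ⟨hb, rfl⟩ := hBf b hb
    exact slice_prod hα hmul he hY hb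
  have fiber_covered : FinitelyCovered α {(e, q, D)} (fiber α e) := of_mem rfl (fun _ hw ↦ hw) hD
  have split : substitute Y (B * ⊤ * B) ≤
      substitute Y B * substitute Y B + substitute Y B * fiber α e * substitute Y B := calc
    substitute Y (B * ⊤ * B) ≤ substitute Y B * substitute Y ⊤ * substitute Y B :=
      substitute_mul_le.trans (mul_le_mul' substitute_mul_le le_rfl)
    _ ≤ substitute Y B * (1 + fiber α e) * substitute Y B :=
      mul_le_mul' (mul_le_mul' le_rfl (substitute_top_le hα hmul he hY)) le_rfl
    _ = _ := by rw [mul_add, mul_one, add_mul]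
  have slice_subset : slice T e f ⊆ T := sep_subset T _
  refine (add ?_ ?_).mono split Subset.rfl
  · exact (blocks.mul hα blocks).mono le_rfl
      ((mul_subset_mul slice_subset slice_subset).trans hmul)
  · exact ((blocks.mul hα fiber_covered).mul hα blocks).mono le_rfl hsharp

theorem kstar [Finite R] (hα : IsMonoidMorphism α) (hmul : T * T ⊆ T)
    (hone : FinitelyCovered α T 1) {q : R} {D : Language A} (hD : ∀ w, α w = e → w ∈ D)
    (hsharp : ∀ f, IsIdempotentElem f → slice T e f * {(e, q, D)} * slice T e f ⊆ T)
    (he : IsIdempotentElem e) (hXe : ∀ w ∈ X, α w = e) (hX : FinitelyCovered α T X) :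
    FinitelyCovered α T X∗ := by
  obtain ⟨Y, rfl, hY⟩ := hX.exists_iSup_slice hXe
  refine mono ?_ kstar_iSup_le_substitute_top Subset.rfl
  exact ((isMulIdeal hα hmul hone).substitute Y).top_of_idempotent_blocks
    ⟨List.prod_nil, fun _ _ ↦ List.prod_append⟩
    (fun r ↦ (hY r).mono (substitute_singleton_le r) (sep_subset T _))
    fun f B hf hB hBf ↦ substitute_blocks hα hmul he hY hD (hsharp f hf) hB hBf

theorem isIdempotentStarClosed [Finite R] (hα : IsMonoidMorphism α) (hmul : T * T ⊆ T)
    (hone : FinitelyCovered α T 1) {q : M → R} {D : M → Language A} (hD : ∀ w, w ∈ D (α w))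
    (hsharp : ∀ e f, IsIdempotentElem e → IsIdempotentElem f →
      slice T e f * {(e, q e, D e)} * slice T e f ⊆ T) :
    IsIdempotentStarClosed α (FinitelyCovered α T) where
  toIsMulIdeal := isMulIdeal hα hmul hone
  kstar_of_idempotent he hXe hX :=
    kstar hα hmul hone (by rintro w rfl; exact hD w) (fun f ↦ hsharp _ f he) he hXe hX

end FinitelyCovered

end Star

end Covers

/-! ### Rating maps -/

section RatingMaps

variable {ρ : Lang A → R} {γ : R → R} {K L : Lang A} {r s : R}

namespace IsQuasiMult

variable [Semiring R]

theorem map_map (hγ : IsQuasiMult ρ γ) (r : R) : γ (γ r) = γ r := by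
  simpa using hγ.2.1 1 r 1

theorem map_map_mul_map (hγ : IsQuasiMult ρ γ) (r s : R) : γ (γ r * γ s) = γ (r * s) := calc
  γ (γ r * γ s) = γ (r * γ s) := by simpa using hγ.2.1 1 r (γ s)
  _ = γ (r * s) := by simpa using hγ.2.1 r s 1

theorem map_rating (hγ : IsQuasiMult ρ γ) (K : Lang A) : γ (ρ K) = ρ K := by
  have cat_nil : cat {[]} K = K := one_mul (M := Language A) K
  rw [← cat_nil, hγ.2.2, hγ.map_map]

end IsQuasiMult

variable [IdemSemiring R]

theorem rle_iff_le : rle r s ↔ r ≤ s := add_eq_right_iff_le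

theorem IsAddEndo.monotone (hγ : IsAddEndo γ) : Monotone γ := fun r s hrs ↦ by
  rw [← add_eq_right_iff_le, ← hγ.2, add_eq_right_iff_le.2 hrs]

theorem IsRatingMap.monotone (hρ : IsRatingMap ρ) : Monotone ρ := fun K L hKL ↦ by
  rw [← add_eq_right_iff_le, ← hρ.2, union_eq_right.2 hKL]

theorem IsQuasiMult.rating_cat_le (hγ : IsQuasiMult ρ γ) (hK : ρ K ≤ γ r) (hL : ρ L ≤ γ s) :
    ρ (cat K L) ≤ γ (r * s) := by
  rw [hγ.2.2, ← hγ.map_map_mul_map r s]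
  exact hγ.1.monotone (mul_le_mul' hK hL)

theorem IsQuasiMult.le_rating_cat (hγ : IsQuasiMult ρ γ) (hK : γ r ≤ ρ K) (hL : γ s ≤ ρ L) :
    γ (r * s) ≤ ρ (cat K L) := by
  rw [hγ.2.2, ← hγ.map_map_mul_map r s]
  exact hγ.1.monotone (mul_le_mul' hK hL)

end RatingMaps

/-! ### Polynomial closure -/

section PolynomialClosure

variable {𝒞 : LClass A} {K L : Lang A}

theorem mem_PolC_of_mem (hK : K ∈ 𝒞) : K ∈ PolC 𝒞 := fun _ h𝒟 ↦ h𝒟.1 hK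

theorem union_mem_PolC (hK : K ∈ PolC 𝒞) (hL : L ∈ PolC 𝒞) : K ∪ L ∈ PolC 𝒞 :=
  fun 𝒟 h𝒟 ↦ h𝒟.2.1 K L (hK 𝒟 h𝒟) (hL 𝒟 h𝒟)

theorem mcat_mem_PolC (hK : K ∈ PolC 𝒞) (a : A) (hL : L ∈ PolC 𝒞) : mcat K a L ∈ PolC 𝒞 :=
  fun 𝒟 h𝒟 ↦ h𝒟.2.2 K L a (hK 𝒟 h𝒟) (hL 𝒟 h𝒟)

theorem PolC_induction {motive : (K : Lang A) → K ∈ PolC 𝒞 → Prop}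
    (base : ∀ K (hK : K ∈ 𝒞), motive K (mem_PolC_of_mem hK))
    (union : ∀ K L hK hL, motive K hK → motive L hL → motive (K ∪ L) (union_mem_PolC hK hL))
    (mcat : ∀ K a L hK hL, motive K hK → motive L hL → motive (mcat K a L) (mcat_mem_PolC hK a hL))
    (hK : K ∈ PolC 𝒞) : motive K hK :=
  (hK {K | ∃ hK, motive K hK}
    ⟨fun K hK ↦ ⟨mem_PolC_of_mem hK, base K hK⟩,
      fun K L ⟨hK, ihK⟩ ⟨hL, ihL⟩ ↦ ⟨union_mem_PolC hK hL, union K L hK hL ihK ihL⟩,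
      fun K L a ⟨hK, ihK⟩ ⟨hL, ihL⟩ ↦ ⟨mcat_mem_PolC hK a hL, mcat K a L hK hL ihK ihL⟩⟩).2

theorem setOf_and_mem_PolC (hempty : ∅ ∈ 𝒞) (p : Prop) (hK : K ∈ PolC 𝒞) :
    {w | p ∧ w ∈ K} ∈ PolC 𝒞 := by
  by_cases hp : p
  · simp only [hp, true_and]
    exact hK
  · simp only [hp, false_and]
    exact mem_PolC_of_mem hempty

theorem cons_preimage_mcat (K : Lang A) (a b : A) (L : Lang A) :
    List.cons a ⁻¹' mcat K b L =
      mcat (List.cons a ⁻¹' K) b L ∪ {w | ([] ∈ K ∧ a = b) ∧ w ∈ L} := by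
  ext w
  constructor
  · rintro ⟨_ | ⟨c, u⟩, hu, v, hv, h⟩
    · obtain ⟨rfl, rfl⟩ := List.cons_eq_cons.1 h
      exact Or.inr ⟨⟨hu, rfl⟩, hv⟩
    · obtain ⟨rfl, rfl⟩ := List.cons_eq_cons.1 h
      exact Or.inl ⟨u, hu, v, hv, rfl⟩
  · rintro (⟨u, hu, v, hv, rfl⟩ | ⟨⟨hnil, rfl⟩, hw⟩)
    · exact ⟨a :: u, hu, v, hv, rfl⟩
    · exact ⟨[], hnil, w, hw, rfl⟩

theorem cons_preimage_mem_PolC (hempty : ∅ ∈ 𝒞) (hqc : QuotientClosed 𝒞) (hK : K ∈ PolC 𝒞)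
    (a : A) : List.cons a ⁻¹' K ∈ PolC 𝒞 := by
  induction hK using PolC_induction with
  | base K hK => exact mem_PolC_of_mem (hqc K hK [a]).1
  | union K L _ _ ihK ihL => exact union_mem_PolC ihK ihL
  | mcat K b L _ hL ihK _ =>
    rw [cons_preimage_mcat]
    exact union_mem_PolC (mcat_mem_PolC ihK b hL) (setOf_and_mem_PolC hempty _ hL)

theorem cat_eq_union_iUnion_mcat (K L : Lang A) :
    cat K L = {w | [] ∈ L ∧ w ∈ K} ∪ ⋃ a, mcat K a (List.cons a ⁻¹' L) := by
  ext w
  rw [mem_union, mem_iUnion]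
  constructor
  · rintro ⟨u, hu, _ | ⟨a, v⟩, hv, rfl⟩
    · exact Or.inl ⟨hv, by simpa using hu⟩
    · exact Or.inr ⟨a, u, hu, v, hv, rfl⟩
  · rintro (⟨hnil, hw⟩ | ⟨a, u, hu, v, hv, rfl⟩)
    · exact ⟨w, hw, [], hnil, w.append_nil⟩
    · exact ⟨u, hu, a :: v, hv, rfl⟩

theorem cat_mem_PolC [Finite A] (hempty : ∅ ∈ 𝒞) (hqc : QuotientClosed 𝒞) (hK : K ∈ PolC 𝒞)
    (hL : L ∈ PolC 𝒞) : cat K L ∈ PolC 𝒞 := by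
  have sup_closed : SupClosed (PolC 𝒞) := fun _ hK _ hL ↦ union_mem_PolC hK hL
  rw [cat_eq_union_iUnion_mcat]
  exact union_mem_PolC (setOf_and_mem_PolC hempty _ hK)
    (sup_closed.iSup_mem (mem_PolC_of_mem hempty) fun a ↦
      mcat_mem_PolC hK a (cons_preimage_mem_PolC hempty hqc hL a))

theorem mcat_eq_cat_cat (K : Lang A) (a : A) (L : Lang A) :
    mcat K a L = cat (cat K {[a]}) L := by
  ext w
  constructor
  · rintro ⟨u, hu, v, hv, rfl⟩
    exact ⟨u ++ [a], ⟨u, hu, [a], rfl, rfl⟩, v, hv, by simp⟩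
  · rintro ⟨_, ⟨u, hu, _, rfl, rfl⟩, v, hv, rfl⟩
    exact ⟨u, hu, v, hv, by simp⟩

end PolynomialClosure

section CanonicalEquivalence

variable {𝒞 : LClass A} {u v w u' v' : List A}

theorem ceq.refl (w : List A) : ceq 𝒞 w w := fun _ _ ↦ Iff.rfl

theorem ceq.symm (h : ceq 𝒞 u v) : ceq 𝒞 v u := fun L hL ↦ (h L hL).symm

theorem ceq.trans (h : ceq 𝒞 u v) (h' : ceq 𝒞 v w) : ceq 𝒞 u w :=
  fun L hL ↦ (h L hL).trans (h' L hL)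

theorem ceq.append (hqc : QuotientClosed 𝒞) (h : ceq 𝒞 u u') (h' : ceq 𝒞 v v') :
    ceq 𝒞 (u ++ v) (u' ++ v') :=
  fun L hL ↦ (h _ (hqc L hL v).2).trans (h' _ (hqc L hL u').1)

namespace IsCClass

variable {D : Lang A}

theorem ceq_of_mem (hD : IsCClass 𝒞 D) (hu : u ∈ D) (hv : v ∈ D) : ceq 𝒞 u v := by
  obtain ⟨w, rfl⟩ := hD
  exact (ceq.symm hu).trans hv

theorem mem (hfin : 𝒞.Finite) (hba : LangBoolAlg 𝒞) (hD : IsCClass 𝒞 D) : D ∈ 𝒞 := by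
  obtain ⟨w, rfl⟩ := hD
  have inf_closed : InfClosed 𝒞 := fun K hK L hL ↦ hba.1.2.2.2 K L hK hL
  have cclass_eq : cclass 𝒞 w = ⨅ L ∈ 𝒞, {v | w ∈ L ↔ v ∈ L} := by
    ext v
    simp only [cclass, ceq, iInf_eq_iInter, mem_iInter, mem_ofPred_eq]
  rw [cclass_eq]
  refine inf_closed.biInf_mem hfin hba.1.2.1 fun L hL ↦ ?_
  by_cases hw : w ∈ L
  · simp only [hw, true_iff]
    exact hL
  · simp only [hw, false_iff]
    exact hba.2 L hL

end IsCClass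

end CanonicalEquivalence

/-! ### The stratified preorder of the polynomial closure -/

/-- The preorder of the `k`-th stratum of `Pol(𝒞)`, in which marked concatenations are nested at
most `k` times: the languages of that stratum are upward closed for it. -/
def PolLE (𝒞 : LClass A) : ℕ → List A → List A → Prop
  | 0, w, w' => ceq 𝒞 w w'
  | k + 1, w, w' => PolLE 𝒞 k w w' ∧ ∀ u a v, w = u ++ a :: v →
      ∃ u' v', w' = u' ++ a :: v' ∧ PolLE 𝒞 k u u' ∧ PolLE 𝒞 k v v'

section Stratification

variable {𝒞 : LClass A} {k : ℕ} {u v w u' v' : List A}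

namespace PolLE

theorem refl (k : ℕ) (w : List A) : PolLE 𝒞 k w w := by
  induction k generalizing w with
  | zero => exact ceq.refl w
  | succ k ih => exact ⟨ih w, fun u a v h ↦ ⟨u, v, h, ih u, ih v⟩⟩

theorem trans (huv : PolLE 𝒞 k u v) (hvw : PolLE 𝒞 k v w) : PolLE 𝒞 k u w := by
  induction k generalizing u v w with
  | zero => exact ceq.trans huv hvw
  | succ k ih =>
    refine ⟨ih huv.1 hvw.1, fun x a y hxy ↦ ?_⟩
    obtain ⟨x', y', hxy', hx, hy⟩ := huv.2 x a y hxy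
    obtain ⟨x'', y'', hxy'', hx', hy'⟩ := hvw.2 x' a y' hxy'
    exact ⟨x'', y'', hxy'', ih hx hx', ih hy hy'⟩

theorem toCeq (h : PolLE 𝒞 k u v) : ceq 𝒞 u v := by
  induction k with
  | zero => exact h
  | succ k ih => exact ih h.1

end PolLE

theorem append_eq_append_cons {x y : List A} {a : A} (h : x ++ y = u ++ a :: v) :
    (∃ t, x = u ++ a :: t ∧ v = t ++ y) ∨ ∃ t, u = x ++ t ∧ y = t ++ a :: v := by
  rcases List.append_eq_append_iff.1 h with ⟨t, hu, hy⟩ | ⟨_ | ⟨b, t⟩, hx, hv⟩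
  · exact Or.inr ⟨t, hu, hy⟩
  · exact Or.inr ⟨[], by simpa using hx.symm, hv.symm⟩
  · obtain ⟨rfl, rfl⟩ := List.cons_eq_cons.1 hv
    exact Or.inl ⟨t, hx, rfl⟩

theorem PolLE.append (hqc : QuotientClosed 𝒞) (hu : PolLE 𝒞 k u u') (hv : PolLE 𝒞 k v v') :
    PolLE 𝒞 k (u ++ v) (u' ++ v') := by
  induction k generalizing u v u' v' with
  | zero => exact ceq.append hqc hu hv
  | succ k ih =>
    refine ⟨ih hu.1 hv.1, fun x a y h ↦ ?_⟩
    rcases append_eq_append_cons h with ⟨t, hx, rfl⟩ | ⟨t, rfl, hy⟩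
    · obtain ⟨x', t', rfl, hx', ht'⟩ := hu.2 x a t hx
      exact ⟨x', t' ++ v', by simp, hx', ih ht' hv.1⟩
    · obtain ⟨t', y', rfl, ht', hy'⟩ := hv.2 t a y hy
      exact ⟨u' ++ t', y', by simp, ih hu.1 ht', hy'⟩

theorem eventually_upwardClosed {K : Lang A} (hK : K ∈ PolC 𝒞) :
    ∀ᶠ k in atTop, ∀ w ∈ K, ∀ w', PolLE 𝒞 k w w' → w' ∈ K := by
  induction hK using PolC_induction with
  | base K hK => exact .of_forall fun k w hw w' h ↦ (h.toCeq K hK).1 hw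
  | union K L _ _ ihK ihL =>
    filter_upwards [ihK, ihL] with k hK hL w hw w' h
    exact hw.imp (fun hw ↦ hK w hw w' h) (fun hw ↦ hL w hw w' h)
  | mcat K a L _ _ ihK ihL =>
    rw [← map_add_atTop_eq_nat 1, eventually_map]
    filter_upwards [ihK, ihL] with k hK hL
    rintro _ ⟨u, hu, v, hv, rfl⟩ w' h
    obtain ⟨u', v', rfl, hu', hv'⟩ := h.2 u a v rfl
    exact ⟨u', hK u hu u' hu', v', hL v hv v' hv', rfl⟩

theorem ceq_iterate_append_self (hqc : QuotientClosed 𝒞) (hw : ceq 𝒞 (w ++ w) w) (k : ℕ) :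
    ceq 𝒞 ((fun u ↦ u ++ u)^[k] w) w :=
  Function.Iterate.rec (ceq 𝒞 · w) (ceq.refl w) (fun _ h ↦ (h.append hqc h).trans hw) k

theorem PolLE.pumping (hqc : QuotientClosed 𝒞) (hw : ceq 𝒞 (w ++ w) w) (k : ℕ) {z : List A}
    (hz : ceq 𝒞 z w) :
    PolLE 𝒞 k ((fun u ↦ u ++ u)^[k] w)
      ((fun u ↦ u ++ u)^[k] w ++ z ++ (fun u ↦ u ++ u)^[k] w) := by
  induction k generalizing z with
  | zero =>
    exact ((((ceq.refl w).append hqc hz).trans hw).append hqc (ceq.refl w) |>.trans hw).symm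
  | succ k ih =>
    rw [Function.iterate_succ_apply']
    have hp := ceq_iterate_append_self hqc hw k
    set p := (fun u ↦ u ++ u)^[k] w
    have insert_left : PolLE 𝒞 k p (p ++ (p ++ z) ++ p) := ih ((hp.append hqc hz).trans hw)
    have insert_right : PolLE 𝒞 k p (p ++ (z ++ p) ++ p) := ih ((hz.append hqc hp).trans hw)
    refine ⟨by simpa using insert_left.append hqc (refl k p), fun u a v h ↦ ?_⟩
    rcases append_eq_append_cons h with ⟨t, hpt, rfl⟩ | ⟨t, rfl, hpt⟩
    · refine ⟨u, t ++ (p ++ (z ++ p) ++ p), ?_, refl k u, (refl k t).append hqc insert_right⟩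
      nth_rw 1 [hpt]
      simp
    · refine ⟨p ++ (p ++ z) ++ p ++ t, v, ?_, insert_left.append hqc (refl k t), refl k v⟩
      nth_rw 4 [hpt]
      simp

end Stratification

/-! ### Soundness -/

/-- The pairs `(s, r)` such that some word of value `s` has an upper set for `PolLE 𝒞 k` whose
rating is at least `γ r`. No cover of `α⁻¹(s)` by languages of the `k`-th stratum of `Pol(𝒞)`
can avoid `γ r` in its imprint. -/
def unavoidable [LE R] (𝒞 : LClass A) (α : List A → M) (ρ : Lang A → R) (γ : R → R) (k : ℕ) :
    Set (M × R) :=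
  {p | ∃ w, α w = p.1 ∧ γ p.2 ≤ ρ {w' | PolLE 𝒞 k w w'}}

section Soundness

variable [IdemSemiring R] {𝒞 : LClass A} {α : List A → M} {cls : M → Lang A} {ρ : Lang A → R}
  {γ : R → R} {k : ℕ}

theorem le_rating_upperSet_append (hqc : QuotientClosed 𝒞) (hρ : IsRatingMap ρ)
    (hγ : IsQuasiMult ρ γ) {u v : List A} {r s : R} (hu : γ r ≤ ρ {w | PolLE 𝒞 k u w})
    (hv : γ s ≤ ρ {w | PolLE 𝒞 k v w}) : γ (r * s) ≤ ρ {w | PolLE 𝒞 k (u ++ v) w} := by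
  refine (hγ.le_rating_cat hu hv).trans (hρ.monotone ?_)
  rintro _ ⟨u', hu', v', hv', rfl⟩
  exact PolLE.append hqc hu' hv'

theorem map_mem_optImprint_of_unavoidable (hρ : IsRatingMap ρ) {s : M} {r : R}
    (h : ∀ k, (s, r) ∈ unavoidable 𝒞 α ρ γ k) : γ r ∈ optImprint (PolC 𝒞) ρ (α ⁻¹' {s}) := by
  rintro Ks ⟨⟨hfinite, hcover⟩, hKs⟩
  obtain ⟨k, hk⟩ := ((eventually_all_finite hfinite).2 fun K hK ↦
    eventually_upwardClosed (hKs hK)).exists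
  obtain ⟨w, hws, hwr⟩ := h k
  obtain ⟨K, hK, hwK⟩ := hcover hws
  exact ⟨K, hK, rle_iff_le.2 (hwr.trans (hρ.monotone fun w' ↦ hk K hK w hwK w'))⟩

variable [Monoid M]

theorem sharp_mem_unavoidable (hqc : QuotientClosed 𝒞) (hα : IsMonoidMorphism α)
    (hclass : ∀ s, IsCClass 𝒞 (cls s)) (hmem : ∀ w, w ∈ cls (α w)) (hρ : IsRatingMap ρ)
    (hγ : IsQuasiMult ρ γ) {e : M} {f : R} (hef : (e, f) ∈ unavoidable 𝒞 α ρ γ k)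
    (he : e * e = e) (hf : f * f = f) :
    (e, f * ρ (cls e) * f) ∈ unavoidable 𝒞 α ρ γ k := by
  obtain ⟨w, hwe : α w = e, hwf⟩ := hef
  have ceq_w {z : List A} (hz : z ∈ cls e) : ceq 𝒞 z w :=
    (hclass e).ceq_of_mem hz (hwe ▸ hmem w)
  have ceq_ww : ceq 𝒞 (w ++ w) w := ceq_w (by simpa only [hα.2, hwe, he] using hmem (w ++ w))
  let p := (fun u ↦ u ++ u)^[k] w
  obtain ⟨hpe, hpf⟩ : α p = e ∧ γ f ≤ ρ {w' | PolLE 𝒞 k p w'} :=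
    Function.Iterate.rec (fun u ↦ α u = e ∧ γ f ≤ ρ {w' | PolLE 𝒞 k u w'}) ⟨hwe, hwf⟩
      (fun u ⟨hue, huf⟩ ↦ ⟨by rw [hα.2, hue, he],
        by simpa only [hf] using le_rating_upperSet_append hqc hρ hγ huf huf⟩) k
  have cat_subset : cat (cat {w' | PolLE 𝒞 k p w'} (cls e)) {w' | PolLE 𝒞 k p w'} ⊆
      {w' | PolLE 𝒞 k p w'} := by
    rintro _ ⟨_, ⟨x, hx, z, hz, rfl⟩, y, hy, rfl⟩
    exact (PolLE.pumping hqc ceq_ww k (ceq_w hz)).trans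
      ((PolLE.append hqc hx (.refl k z)).append hqc hy)
  exact ⟨p, hpe, (hγ.le_rating_cat (hγ.le_rating_cat hpf (hγ.map_rating _).le) hpf).trans
    (hρ.monotone cat_subset)⟩

theorem polSaturated_unavoidable (hqc : QuotientClosed 𝒞) (hα : IsMonoidMorphism α)
    (hclass : ∀ s, IsCClass 𝒞 (cls s)) (hmem : ∀ w, w ∈ cls (α w)) (hρ : IsRatingMap ρ)
    (hγ : IsQuasiMult ρ γ) (k : ℕ) : PolSaturated α cls ρ (unavoidable 𝒞 α ρ γ k) := by
  refine ⟨fun w ↦ ⟨w, rfl, ?_⟩, ?_, ?_, fun e f ↦ sharp_mem_unavoidable hqc hα hclass hmem hρ hγ⟩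
  · rw [hγ.map_rating]
    exact hρ.monotone (singleton_subset_iff.2 (PolLE.refl k w))
  · rintro s r q ⟨w, hw, hwq⟩ hrq
    exact ⟨w, hw, (hγ.1.monotone (rle_iff_le.1 hrq)).trans hwq⟩
  · rintro s₁ s₂ r₁ r₂ ⟨w₁, hs₁, hr₁⟩ ⟨w₂, hs₂, hr₂⟩
    exact ⟨w₁ ++ w₂, by rw [hα.2, hs₁, hs₂], le_rating_upperSet_append hqc hρ hγ hr₁ hr₂⟩

end Soundness

/-! ### Completeness -/

/-- The triples `(s, r, K)` with `(s, r) ∈ S` in which `K ∈ Pol(𝒞)` has a rating bounded by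
`γ r`. -/
def certified [LE R] (𝒞 : LClass A) (ρ : Lang A → R) (γ : R → R) (S : Set (M × R)) :
    Set (M × R × Language A) :=
  {t | t.2.2 ∈ PolC 𝒞 ∧ (t.1, t.2.1) ∈ S ∧ ρ t.2.2 ≤ γ t.2.1}

section Completeness

theorem exists_isIdempotentElem_of_mul_mem {N : Type*} [Semigroup N] [Finite N] {s : Set N}
    (hs : s.Nonempty) (hmul : ∀ x ∈ s, ∀ y ∈ s, x * y ∈ s) : ∃ m ∈ s, IsIdempotentElem m := by
  let : TopologicalSpace N := ⊥
  have : DiscreteTopology N := ⟨rfl⟩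
  exact exists_idempotent_in_compact_subsemigroup (fun _ ↦ continuous_of_discreteTopology) s hs
    s.toFinite.isCompact hmul

theorem optImprint_subset_of_finitelyCovered [IdemSemiring R] {𝒞 : LClass A} {α : List A → M}
    {ρ : Lang A → R} {γ : R → R} {S : Set (M × R)}
    (hcover : FinitelyCovered α (certified 𝒞 ρ γ S) ⊤) (s : M) :
    optImprint (PolC 𝒞) ρ (α ⁻¹' {s}) ⊆ {q | ∃ r, (s, r) ∈ S ∧ q ≤ γ r} := by
  intro q hq
  obtain ⟨F, hF, hfinite, hcover⟩ := hcover
  let Ks : LClass A := {K | ∃ r, (s, r, K) ∈ F}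
  have covers : IsCCover (PolC 𝒞) Ks (α ⁻¹' {s}) := by
    refine ⟨⟨(hfinite.image fun t ↦ t.2.2).subset fun K ⟨r, hK⟩ ↦ ⟨_, hK, rfl⟩, ?_⟩,
      fun K ⟨r, hK⟩ ↦ (hF hK).1⟩
    rintro w rfl
    obtain ⟨⟨_, r, K⟩, ht, rfl, hwK⟩ := hcover w trivial
    exact ⟨K, ⟨r, ht⟩, hwK⟩
  obtain ⟨K, ⟨r, hK⟩, hqK⟩ := hq Ks covers
  obtain ⟨-, hrS, hKr⟩ := hF hK
  exact ⟨r, hrS, (rle_iff_le.1 hqK).trans hKr⟩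

variable [IdemSemiring R] [Monoid M] {𝒞 : LClass A} {α : List A → M} {cls : M → Lang A}
  {ρ : Lang A → R} {γ : R → R} {S : Set (M × R)}

theorem certified_mul_certified_subset [Finite A] (hempty : ∅ ∈ 𝒞) (hqc : QuotientClosed 𝒞)
    (hγ : IsQuasiMult ρ γ) (hS : PolSaturated α cls ρ S) :
    certified 𝒞 ρ γ S * certified 𝒞 ρ γ S ⊆ certified 𝒞 ρ γ S := by
  rintro _ ⟨t, ⟨hK, hr, hKr⟩, t', ⟨hK', hr', hKr'⟩, rfl⟩
  exact ⟨cat_mem_PolC hempty hqc hK hK', hS.2.2.1 _ _ _ _ hr hr', hγ.rating_cat_le hKr hKr'⟩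

theorem slice_mul_cls_mul_slice_subset [Finite A] (hempty : ∅ ∈ 𝒞) (hqc : QuotientClosed 𝒞)
    (hγ : IsQuasiMult ρ γ) (hS : PolSaturated α cls ρ S) {e : M} {f : R} (hcls : cls e ∈ 𝒞)
    (he : IsIdempotentElem e) (hf : IsIdempotentElem f) :
    slice (certified 𝒞 ρ γ S) e f * {(e, ρ (cls e), cls e)} * slice (certified 𝒞 ρ γ S) e f ⊆
      certified 𝒞 ρ γ S := by
  rintro _ ⟨_, ⟨⟨_, _, K⟩, ⟨⟨hK, hef, hKf⟩, rfl, rfl⟩, _, rfl, rfl⟩,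
    ⟨_, _, K'⟩, ⟨⟨hK', -, hKf'⟩, rfl, rfl⟩, rfl⟩
  refine ⟨cat_mem_PolC hempty hqc (cat_mem_PolC hempty hqc hK (mem_PolC_of_mem hcls)) hK', ?_,
    hγ.rating_cat_le (hγ.rating_cat_le hKf (hγ.map_rating _).ge) hKf'⟩
  change (_ * _ * _, _ * _ * _) ∈ S
  rw [he.eq, he.eq]
  exact hS.2.2.2 _ _ hef he hf

theorem exists_idempotent_rating_nil [Finite R] (hα : IsMonoidMorphism α) (hγ : IsQuasiMult ρ γ)
    (hS : PolSaturated α cls ρ S) :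
    ∃ f, IsIdempotentElem f ∧ (1, f) ∈ S ∧ γ f = ρ {[]} := by
  have cat_nil_nil : cat {[]} {[]} = ({[]} : Lang A) := one_mul (M := Language A) 1
  obtain ⟨f, ⟨hfS, hfγ⟩, hf⟩ := exists_isIdempotentElem_of_mul_mem
    (s := {r | ((1 : M), r) ∈ S ∧ γ r = ρ {[]}})
    ⟨ρ {[]}, by simpa only [hα.1] using hS.1 [], hγ.map_rating _⟩
    fun x ⟨hx, hxγ⟩ y ⟨hy, hyγ⟩ ↦ ⟨by simpa using hS.2.2.1 _ _ _ _ hx hy,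
      by rw [← hγ.map_map_mul_map, hxγ, hyγ, ← hγ.2.2, cat_nil_nil]⟩
  exact ⟨f, hf, hfS, hfγ⟩

theorem exists_certified_cls_one [Finite R] (hα : IsMonoidMorphism α) (hγ : IsQuasiMult ρ γ)
    (hS : PolSaturated α cls ρ S) (hcls : cls 1 ∈ 𝒞) :
    ∃ r, (1, r, cls 1) ∈ certified 𝒞 ρ γ S := by
  obtain ⟨f, hf, hfS, hfγ⟩ := exists_idempotent_rating_nil hα hγ hS
  have cat_nil : cat (cat {[]} (cls 1)) {[]} = cls 1 :=
    (mul_one (M := Language A) _).trans (one_mul (M := Language A) _)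
  refine ⟨f * ρ (cls 1) * f, mem_PolC_of_mem hcls, hS.2.2.2 1 f hfS (one_mul 1) hf, ?_⟩
  simpa only [cat_nil] using
    hγ.rating_cat_le (hγ.rating_cat_le hfγ.ge (hγ.map_rating (cls 1)).ge) hfγ.ge

theorem mcat_cls_one_mem_certified (hγ : IsQuasiMult ρ γ) (hS : PolSaturated α cls ρ S) {r : R}
    (hr : (1, r, cls 1) ∈ certified 𝒞 ρ γ S) (a : A) :
    (α [a], r * ρ {[a]} * r, mcat (cls 1) a (cls 1)) ∈ certified 𝒞 ρ γ S := by
  obtain ⟨hcls, hrS, hρr⟩ := hr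
  refine ⟨mcat_mem_PolC hcls a hcls, ?_, ?_⟩
  · simpa using hS.2.2.1 _ _ _ _ (hS.2.2.1 _ _ _ _ hrS (hS.1 [a])) hrS
  · simpa only [mcat_eq_cat_cat] using
      hγ.rating_cat_le (hγ.rating_cat_le hρr (hγ.map_rating {[a]}).ge) hρr

theorem finitelyCovered_certified_top [Finite A] [Finite R] [Finite M] (hempty : ∅ ∈ 𝒞)
    (hqc : QuotientClosed 𝒞) (hα : IsMonoidMorphism α) (hcls : ∀ s, cls s ∈ 𝒞)
    (hmem : ∀ w, w ∈ cls (α w)) (hγ : IsQuasiMult ρ γ) (hS : PolSaturated α cls ρ S) :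
    FinitelyCovered α (certified 𝒞 ρ γ S) ⊤ := by
  obtain ⟨r, hr⟩ := exists_certified_cls_one hα hγ hS (hcls 1)
  have nil_mem : [] ∈ cls 1 := hα.1 ▸ hmem []
  have one : FinitelyCovered α (certified 𝒞 ρ γ S) 1 :=
    .of_mem hr (by rintro _ rfl; exact hα.1) (by rintro _ rfl; exact nil_mem)
  have letter (a : A) : FinitelyCovered α (certified 𝒞 ρ γ S) {[a]} :=
    .of_mem (mcat_cls_one_mem_certified hγ hS hr a) (by rintro _ rfl; rfl)
      (by rintro _ rfl; exact ⟨[], nil_mem, [], nil_mem, rfl⟩)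
  exact (FinitelyCovered.isIdempotentStarClosed hα
    (certified_mul_certified_subset hempty hqc hγ hS) one hmem
    fun e f he hf ↦ slice_mul_cls_mul_slice_subset hempty hqc hγ hS (hcls e) he hf).top hα letter

end Completeness

/-- Characterization of the `α`-pointed `Pol(𝒞)`-optimal
`ρ`-imprint via the least `Pol(𝒞)`-saturated set. -/
theorem statement16 {A R M : Type} [Fintype A] [Semiring R] [Finite R]
    [Monoid M] [Finite M] (hidem : ∀ r : R, r + r = r)
    (𝒞 : LClass A) (hfin : 𝒞.Finite) (hba : LangBoolAlg 𝒞)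
    (hqc : QuotientClosed 𝒞)
    (α : List A → M) (hα : IsMonoidMorphism α)
    (cls : M → Lang A)
    (hcls : ∀ s : M, IsCClass 𝒞 (cls s) ∧ α ⁻¹' {s} ⊆ cls s)
    (ρ : Lang A → R) (hρ : IsRatingMap ρ) (γ : R → R) (hγ : IsQuasiMult ρ γ)
    (S : Set (M × R)) (hS : PolSaturated α cls ρ S)
    (hleast : ∀ S' : Set (M × R), PolSaturated α cls ρ S' → S ⊆ S') :
    {p : M × R | p.2 ∈ optImprint (PolC 𝒞) ρ (α ⁻¹' {p.1})} =
      {p : M × R | ∃ r : R, (p.1, r) ∈ S ∧ rle p.2 (γ r)} := by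
  let : IdemSemiring R := .ofSemiring hidem
  have hmem (w : List A) : w ∈ cls (α w) := (hcls (α w)).2 rfl
  ext ⟨s, q⟩
  constructor
  · intro hq
    have hcover := finitelyCovered_certified_top hba.1.1 hqc hα
      (fun s ↦ (hcls s).1.mem hfin hba) hmem hγ hS
    obtain ⟨r, hr, hqr⟩ := optImprint_subset_of_finitelyCovered hcover s hq
    exact ⟨r, hr, rle_iff_le.2 hqr⟩
  · rintro ⟨r, hr, hqr⟩ Ks hKs
    have unavoidable_r (k : ℕ) : (s, r) ∈ unavoidable 𝒞 α ρ γ k :=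
      hleast _ (polSaturated_unavoidable hqc hα (fun s ↦ (hcls s).1) hmem hρ hγ k) hr
    obtain ⟨K, hK, hrK⟩ := map_mem_optImprint_of_unavoidable hρ unavoidable_r Ks hKs
    exact ⟨K, hK, rle_iff_le.2 ((rle_iff_le.1 hqr).trans (rle_iff_le.1 hrK))⟩

end Paper
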